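/- (Hölder's theorem) The Euler Gamma function is differentially transcendental over ℂ(x): for every n ∈ ℕ and every polynomial P in n + 2 variables with complex coefficients, if P(x, Γ(x), Γ'(x), …, Γ⁽ⁿ⁾(x)) = 0 for all x ∈ ℂ with Re(x) > 0 (where Γ⁽ⁱ⁾ denotes the i-th complex derivative of the complex Gamma function, which is analytic on the right half-plane), then P = 0. -/

import Mathlib

set_option synthInstance.maxHeartbeats 400000
set_option maxHeartbeats 1000000

namespace Holder
open Filter

abbrev A := MvPolynomial ℕᵒᵈ (Polynomial ℂ)
noncomputable abbrev mo : MonomialOrder ℕᵒᵈ := MonomialOrder.lex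

def dn (i : ℕᵒᵈ) : ℕ := OrderDual.ofDual i
def pr (i : ℕᵒᵈ) : ℕᵒᵈ := OrderDual.toDual (OrderDual.ofDual i - 1)

noncomputable def W (i : ℕᵒᵈ) : A :=
  MvPolynomial.C Polynomial.X * MvPolynomial.X i
    + MvPolynomial.C (dn i : Polynomial ℂ) * MvPolynomial.X (pr i)

noncomputable def S : A →+* A :=
  MvPolynomial.eval₂Hom (MvPolynomial.C.comp (Polynomial.compRingHom (Polynomial.X + 1))) W

noncomputable def E (x : ℂ) (y : ℕᵒᵈ → ℂ) : A →+* ℂ :=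
  MvPolynomial.eval₂Hom (Polynomial.evalRingHom x) y

def T (x : ℂ) (y : ℕᵒᵈ → ℂ) (i : ℕᵒᵈ) : ℂ := x * y i + (dn i : ℂ) * y (pr i)

@[simp] lemma E_C (x : ℂ) (y : ℕᵒᵈ → ℂ) (p : Polynomial ℂ) : E x y (MvPolynomial.C p) = p.eval x := by
  simp [E]
@[simp] lemma E_X (x : ℂ) (y : ℕᵒᵈ → ℂ) (i : ℕᵒᵈ) : E x y (MvPolynomial.X i) = y i := by
  simp [E]

lemma E_S (x : ℂ) (y : ℕᵒᵈ → ℂ) (P : A) : E x y (S P) = E (x+1) (T x y) P := by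
  induction P using MvPolynomial.induction_on with
  | C p => simp [S, Polynomial.eval_comp]
  | add p q hp hq => simp [hp, hq]
  | mul_X p i hp => simp [hp]; left; simp [S, W, T]

lemma W_lt (i : ℕᵒᵈ) : mo.toSyn (mo.degree (MvPolynomial.C (dn i : Polynomial ℂ) * MvPolynomial.X (pr i) : A)) <
    mo.toSyn (mo.degree (MvPolynomial.C Polynomial.X * MvPolynomial.X i : A)) := by
  rw [mo.degree_mul (f := MvPolynomial.C Polynomial.X) (by simp [Polynomial.X_ne_zero]) (by simp)]
  rw [mo.degree_C, zero_add, mo.degree_X]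
  by_cases h : dn i = 0
  · simp only [h, Nat.cast_zero, map_zero, zero_mul, mo.degree_zero]
    rw [← mo.bot_eq_zero, bot_lt_iff_ne_bot, mo.bot_eq_zero]
    simp
  · rw [mo.degree_mul (by simpa using h) (by simp), mo.degree_C, zero_add, mo.degree_X]
    rw [MonomialOrder.lex_lt_iff, Finsupp.Lex.single_lt_iff]
    show dn i - 1 < dn i
    omega

lemma W_deg (i : ℕᵒᵈ) : mo.degree (W i) = Finsupp.single i 1 := by
  rw [W, mo.degree_add_of_lt (W_lt i)]
  rw [mo.degree_mul (f := MvPolynomial.C Polynomial.X) (by simp [Polynomial.X_ne_zero]) (by simp)]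
  rw [mo.degree_C, zero_add, mo.degree_X]

lemma W_lc (i : ℕᵒᵈ) : mo.leadingCoeff (W i) = Polynomial.X := by
  rw [W, mo.leadingCoeff_add_of_lt (W_lt i), mo.leadingCoeff_mul]
  simp

lemma W_ne (i : ℕᵒᵈ) : W i ≠ 0 := by
  intro h
  have := W_lc i
  rw [h, mo.leadingCoeff_zero] at this
  exact Polynomial.X_ne_zero this.symm

lemma S_mon (a : ℕᵒᵈ →₀ ℕ) (c : Polynomial ℂ) :
    S (MvPolynomial.monomial a c) = MvPolynomial.C (c.comp (Polynomial.X + 1)) * ∏ i ∈ a.support, W i ^ a i := by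
  simp [S, MvPolynomial.eval₂_monomial, Finsupp.prod]

lemma prod_deg (a : ℕᵒᵈ →₀ ℕ) : mo.degree (∏ i ∈ a.support, W i ^ a i) = a := by
  rw [mo.degree_prod (fun i _ => pow_ne_zero _ (W_ne i))]
  simp only [mo.degree_pow, W_deg]
  conv_rhs => rw [← Finsupp.sum_single a]
  simp [Finsupp.sum]

lemma prod_lc (a : ℕᵒᵈ →₀ ℕ) : MvPolynomial.coeff a (∏ i ∈ a.support, W i ^ a i) =
    Polynomial.X ^ (a.degree) := by
  have h0 : MvPolynomial.coeff a (∏ i ∈ a.support, W i ^ a i) = mo.leadingCoeff (∏ i ∈ a.support, W i ^ a i) := by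
    rw [MonomialOrder.leadingCoeff, prod_deg]
  rw [h0]
  rw [mo.leadingCoeff_prod_of_regular]
  · simp only [mo.leadingCoeff_pow, W_lc, Finset.prod_pow_eq_pow_sum, Finsupp.degree]
    rfl
  · intro i _
    rw [mo.leadingCoeff_pow, W_lc]
    exact (IsRegular.of_ne_zero Polynomial.X_ne_zero).pow _

lemma S_mon_deg (a : ℕᵒᵈ →₀ ℕ) (c : Polynomial ℂ) :
    mo.toSyn (mo.degree (S (MvPolynomial.monomial a c))) ≤ mo.toSyn a := by
  rw [S_mon]
  refine mo.degree_mul_le.trans ?_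
  rw [mo.degree_C, zero_add, prod_deg]

lemma S_deg (P : A) (a : ℕᵒᵈ →₀ ℕ) (h : mo.toSyn (mo.degree P) ≤ mo.toSyn a) :
    mo.toSyn (mo.degree (S P)) ≤ mo.toSyn a := by
  rw [P.as_sum, map_sum]
  refine mo.degree_sum_le.trans ?_
  refine Finset.sup_le fun s hs => (S_mon_deg _ _).trans ((mo.le_degree hs).trans h)

lemma S_coeff (P : A) (a : ℕᵒᵈ →₀ ℕ) (h : mo.toSyn (mo.degree P) ≤ mo.toSyn a) :
    MvPolynomial.coeff a (S P) = (MvPolynomial.coeff a P).comp (Polynomial.X + 1) * Polynomial.X ^ a.degree := by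
  conv_lhs => rw [P.as_sum, map_sum, MvPolynomial.coeff_sum]
  rw [Finset.sum_eq_single a]
  · rw [S_mon, MvPolynomial.coeff_C_mul, prod_lc]
  · intro b hb hba
    apply mo.coeff_eq_zero_of_lt
    refine (S_mon_deg _ _).trans_lt ?_
    refine lt_of_le_of_ne ((mo.le_degree hb).trans h) ?_
    simpa using hba
  · intro ha
    rw [MvPolynomial.notMem_support_iff] at ha
    simp [ha]

lemma E_zero (P : A) (h : ∀ k : ℕ, ∀ y, E (k + 1) y P = 0) : P = 0 := by
  ext1 s
  rw [MvPolynomial.coeff_zero]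
  apply Polynomial.eq_zero_of_infinite_isRoot
  refine Set.Infinite.mono (s := Set.range (fun k : ℕ => (k : ℂ) + 1)) ?_
    (Set.infinite_range_of_injective (fun a b hab => by simpa using hab))
  rintro _ ⟨k, rfl⟩
  have : MvPolynomial.map (Polynomial.evalRingHom ((k : ℂ) + 1)) P = 0 := by
    apply MvPolynomial.funext
    intro y
    rw [MvPolynomial.eval_map, map_zero]
    exact h k y
  have := congrArg (MvPolynomial.coeff s) this
  simpa [MvPolynomial.coeff_map] using this

lemma E_dvd (P : A) (c : ℂ) (h : ∀ y, E c y P = 0) :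
    ∃ Q, P = MvPolynomial.C (Polynomial.X - Polynomial.C c) * Q := by
  have h0 : MvPolynomial.map (Polynomial.evalRingHom c) P = 0 := by
    apply MvPolynomial.funext
    intro y
    rw [MvPolynomial.eval_map, map_zero]
    exact h y
  have : MvPolynomial.C (Polynomial.X - Polynomial.C c) ∣ P := by
    rw [MvPolynomial.C_dvd_iff_dvd_coeff]
    intro s
    rw [Polynomial.dvd_iff_isRoot]
    have := congrArg (MvPolynomial.coeff s) h0
    simpa [MvPolynomial.coeff_map] using this
  exact this

def z0 : ℕᵒᵈ := OrderDual.toDual 0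

noncomputable def K : A →+* A := MvPolynomial.eval₂Hom MvPolynomial.C (fun i => if i = z0 then 0 else MvPolynomial.X i)

lemma E_K (x : ℂ) (y : ℕᵒᵈ → ℂ) (P : A) : E x y (K P) = E x (Function.update y z0 0) P := by
  induction P using MvPolynomial.induction_on with
  | C p => simp [K]
  | add p q hp hq => simp [hp, hq]
  | mul_X p i hp => 
    simp only [map_mul, hp, E_X]; refine congrArg _ ?_; by_cases hi : i = z0 <;> simp [K, hi]

lemma K_dvd (P : A) : MvPolynomial.X z0 ∣ P - K P := by
  induction P using MvPolynomial.induction_on with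
  | C p => simp [K]
  | add p q hp hq => 
    rw [map_add, add_sub_add_comm]; exact dvd_add hp hq
  | mul_X p i hp =>
    by_cases hi : i = z0
    · simp [K, hi]
    · have : K (MvPolynomial.X i) = MvPolynomial.X i := by simp [K, hi]
      rw [map_mul, this, ← sub_mul]
      exact dvd_mul_of_dvd_left hp _

lemma T_surj (x : ℂ) (hx : x ≠ 0) (z : ℕᵒᵈ → ℂ) : ∃ y, T x y = z ∧ (z z0 = 0 → y z0 = 0) := by
  let y : ℕ → ℂ := fun i => Nat.rec (z z0 / x) (fun j r => (z (OrderDual.toDual (j+1)) - (j+1) * r) / x) i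
  refine ⟨fun i => y (OrderDual.ofDual i), ?_, ?_⟩
  · funext i
    induction i using OrderDual.rec with
    | toDual i =>
    rcases i with _ | j
    · simp [T, dn, y, z0]; field_simp
    · simp only [T, dn, pr, y, OrderDual.ofDual_toDual, Nat.add_sub_cancel]
      push_cast
      field_simp
      ring
  · intro h
    simp [y, z0] at h ⊢
    left; exact h

lemma T_zero (z : ℕᵒᵈ → ℂ) (hz : z z0 = 0) : ∃ y, T 0 y = z := by
  refine ⟨fun i => z (OrderDual.toDual (OrderDual.ofDual i + 1)) / (OrderDual.ofDual i + 1 : ℕ), ?_⟩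
  funext i
  induction i using OrderDual.rec with
  | toDual i =>
  rcases i with _ | j
  · simp [T, dn]; exact hz.symm
  · simp only [T, dn, pr, OrderDual.ofDual_toDual, Nat.add_sub_cancel]
    have : ((j+1 : ℕ) : ℂ) ≠ 0 := by exact_mod_cast Nat.succ_ne_zero j
    field_simp
    simp

noncomputable def g (z : ℂ) (i : ℕᵒᵈ) : ℂ := iteratedDeriv (dn i) Complex.Gamma z

def Ann (P : A) : Prop := ∀ᶠ k : ℕ in atTop, E k (g k) P = 0

lemma anal (z : ℂ) (hz : 0 < z.re) : AnalyticAt ℂ Complex.Gamma z := by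
  have : DifferentiableOn ℂ Complex.Gamma {z | 0 < z.re} := by
    intro w hw
    refine (Complex.differentiableAt_Gamma w ?_).differentiableWithinAt
    rintro m rfl
    simp at hw
    have : (0:ℝ) ≤ m := m.cast_nonneg
    linarith
  exact this.analyticAt ((isOpen_lt continuous_const Complex.continuous_re).mem_nhds hz)

lemma hasD (i : ℕ) (z : ℂ) (hz : 0 < z.re) :
    HasDerivAt (iteratedDeriv i Complex.Gamma) (iteratedDeriv (i+1) Complex.Gamma z) z := by
  rw [iteratedDeriv_succ]
  apply DifferentiableAt.hasDerivAt
  apply AnalyticAt.differentiableAt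
  rw [iteratedDeriv_eq_iterate]
  exact (anal z hz).iterated_deriv i

lemma gamma_rec (i : ℕ) : ∀ z : ℂ, 0 < z.re → iteratedDeriv i Complex.Gamma (z+1) =
    z * iteratedDeriv i Complex.Gamma z + i * iteratedDeriv (i-1) Complex.Gamma z := by
  induction i with
  | zero =>
    intro z hz
    simp
    apply Complex.Gamma_add_one
    rintro rfl; simp at hz
  | succ i ih =>
    intro z hz
    have h1 : HasDerivAt (fun w => iteratedDeriv i Complex.Gamma (w+1)) (iteratedDeriv (i+1) Complex.Gamma (z+1)) z := by
      apply HasDerivAt.comp_add_const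
      apply hasD
      simp; linarith
    have h2 : HasDerivAt (fun w => w * iteratedDeriv i Complex.Gamma w + i * iteratedDeriv (i-1) Complex.Gamma w)
        ((1 * iteratedDeriv i Complex.Gamma z + z * iteratedDeriv (i+1) Complex.Gamma z) + i * iteratedDeriv (i-1+1) Complex.Gamma z) z :=
      ((hasDerivAt_id z).mul (hasD i z hz)).add ((hasD (i-1) z hz).const_mul _)
    have h3 : (fun w => iteratedDeriv i Complex.Gamma (w+1)) =ᶠ[nhds z] (fun w => w * iteratedDeriv i Complex.Gamma w + i * iteratedDeriv (i-1) Complex.Gamma w) := by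
      filter_upwards [(isOpen_lt continuous_const Complex.continuous_re).mem_nhds hz] with w hw
      exact ih w hw
    rw [h1.unique (h2.congr_of_eventuallyEq h3)]
    rcases i with _ | j
    · simp; ring
    · simp; ring

lemma T_g (k : ℕ) (hk : 0 < k) : T k (g k) = g ((k + 1 : ℕ) : ℂ) := by
  funext i
  push_cast
  exact (gamma_rec (dn i) k (by simpa using hk)).symm

lemma Ann_S (P : A) (h : Ann P) : Ann (S P) := by
  have := (tendsto_add_atTop_nat 1).eventually h
  filter_upwards [this, eventually_gt_atTop 0] with k hk h0
  rw [E_S, T_g k h0]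
  exact_mod_cast hk

noncomputable def mu (Q : A) : mo.syn ×ₗ ℕ := toLex (mo.toSyn (mo.degree Q), (mo.leadingCoeff Q).natDegree)

lemma mu_wf : WellFounded (fun P Q : A => mu P < mu Q) :=
  InvImage.wf mu wellFounded_lt

lemma mu_lt (P Q : A) (hQ0 : Q ≠ 0) (hd : mo.toSyn (mo.degree Q) ≤ mo.toSyn (mo.degree P))
    (hc : (MvPolynomial.coeff (mo.degree P) Q).degree < (mo.leadingCoeff P).degree) : mu Q < mu P := by
  rw [mu, mu, Prod.Lex.toLex_lt_toLex]
  rcases hd.lt_or_eq with h | h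
  · left; exact h
  · right
    have h' : mo.degree Q = mo.degree P := mo.toSyn.injective h
    refine ⟨h, ?_⟩
    rw [← h'] at hc
    exact Polynomial.natDegree_lt_natDegree (mo.leadingCoeff_ne_zero_iff.2 hQ0) hc

lemma exists_min (P : A) (hP : Ann P) (hne : P ≠ 0) : ∃ P : A, Ann P ∧ P ≠ 0 ∧
    ∀ Q : A, Ann Q → mo.toSyn (mo.degree Q) ≤ mo.toSyn (mo.degree P) →
      (MvPolynomial.coeff (mo.degree P) Q).degree < (mo.leadingCoeff P).degree → Q = 0 := by
  obtain ⟨P, ⟨hP, hne⟩, hmin⟩ := mu_wf.has_min {Q : A | Ann Q ∧ Q ≠ 0} ⟨P, hP, hne⟩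
  refine ⟨P, hP, hne, fun Q hQ hd hc => ?_⟩
  by_contra hQ0
  exact hmin Q ⟨hQ, hQ0⟩ (mu_lt P Q hQ0 hd hc)

lemma quot (p f : Polynomial ℂ) (hp0 : p ≠ 0) : ∃ q r : Polynomial ℂ, f = p * q + r ∧ r.degree < p.degree :=
  ⟨f / p, f % p, (EuclideanDomain.div_add_mod f p).symm, Polynomial.degree_mod_lt f hp0⟩

lemma mainThm (P : A) (hP : Ann P) : P = 0 := by
  by_contra hne
  obtain ⟨P, hP, hne, low⟩ := exists_min P hP hne
  obtain ⟨a, ha⟩ : ∃ a, a = mo.degree P := ⟨_, rfl⟩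
  obtain ⟨p, hp⟩ : ∃ p, p = mo.leadingCoeff P := ⟨_, rfl⟩
  have hpc : MvPolynomial.coeff a P = p := by rw [ha, hp, MonomialOrder.leadingCoeff]
  have hp0 : p ≠ 0 := by rw [hp]; exact mo.leadingCoeff_ne_zero_iff.2 hne
  rw [← ha, ← hp] at low
  have hdeg : mo.toSyn (mo.degree P) ≤ mo.toSyn a := by rw [ha]
  obtain ⟨q, r, hqr, hr⟩ := quot p (p.comp (Polynomial.X + 1) * Polynomial.X ^ a.degree) hp0
  have hS : S P - MvPolynomial.C q * P = 0 := by
    apply low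
    · filter_upwards [hP, Ann_S P hP] with k h1 h2
      simp [h1, h2]
    · refine mo.degree_sub_le.trans (sup_le (S_deg P a hdeg) ?_)
      refine mo.degree_mul_le.trans ?_
      rw [mo.degree_C, zero_add]; exact hdeg
    · rw [MvPolynomial.coeff_sub, MvPolynomial.coeff_C_mul, S_coeff P a hdeg, hpc, hqr]
      convert hr using 2; ring
  have hE : ∀ x y, E (x+1) (T x y) P = q.eval x * E x y P := by
    intro x y
    rw [← E_S, sub_eq_zero.1 hS]; simp
  have hq : p.comp (Polynomial.X + 1) * Polynomial.X ^ a.degree = p * q := by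
    have := congrArg (MvPolynomial.coeff a) hS
    rw [MvPolynomial.coeff_sub, MvPolynomial.coeff_C_mul, S_coeff P a hdeg, hpc] at this
    rw [MvPolynomial.coeff_zero] at this
    linear_combination this
  -- a is nonzero
  have ha0 : a ≠ 0 := by
    intro h0
    have hPC : P = MvPolynomial.C p := by
      rw [hp]; exact mo.eq_C_of_degree_eq_zero (by rw [← ha, h0])
    apply hp0
    rw [hPC] at hP
    obtain ⟨N, hN⟩ := eventually_atTop.1 hP
    apply Polynomial.eq_zero_of_infinite_isRoot
    refine Set.Infinite.mono (s := Set.range (fun k : ℕ => ((N + k : ℕ) : ℂ))) ?_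
      (Set.infinite_range_of_injective (fun a b hab => by simpa using hab))
    rintro _ ⟨k, rfl⟩
    simpa using hN (N+k) (by omega)
  have hq0 : q ≠ 0 := by
    rintro rfl
    rw [mul_zero] at hq
    have hc : p.comp (Polynomial.X + 1) ≠ 0 := by
      have : (Polynomial.X + 1 : Polynomial ℂ) = Polynomial.X + Polynomial.C 1 := by simp
      rw [this, Ne, Polynomial.comp_X_add_C_eq_zero_iff]
      exact hp0
    exact mul_ne_zero hc (pow_ne_zero _ Polynomial.X_ne_zero) hq
  have hqd : q.natDegree = a.degree := by
    have h1 := congrArg Polynomial.natDegree hq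
    have hc : p.comp (Polynomial.X + 1) ≠ 0 := by
      rintro h
      rw [h, zero_mul] at hq
      exact mul_ne_zero hp0 hq0 hq.symm
    rw [Polynomial.natDegree_mul hp0 hq0, Polynomial.natDegree_mul hc (pow_ne_zero _ Polynomial.X_ne_zero)] at h1
    have : (Polynomial.X + 1 : Polynomial ℂ) = Polynomial.X + Polynomial.C 1 := by simp
    rw [Polynomial.natDegree_comp, this, Polynomial.natDegree_X_add_C] at h1
    simp at h1
    omega
  obtain ⟨γ, hγ⟩ : ∃ γ, q.IsRoot γ := by
    apply IsAlgClosed.exists_root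
    rw [Polynomial.degree_eq_natDegree hq0, hqd]
    have h3 : a.degree ≠ 0 := fun h => ha0 ((Finsupp.degree_eq_zero_iff a).1 h)
    exact_mod_cast h3
  have hγ' : q.eval γ = 0 := hγ
  by_cases h0 : γ = 0
  · subst h0
    have key : ∀ k : ℕ, ∀ y : ℕᵒᵈ → ℂ, y z0 = 0 → E (k + 1) y P = 0 := by
      intro k
      induction k with
      | zero =>
        intro y hy
        obtain ⟨w, rfl⟩ := T_zero y hy
        have := hE 0 w
        rw [hγ', zero_mul] at this
        simpa using this
      | succ k ih =>
        intro y hy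
        obtain ⟨w, rfl, hw⟩ := T_surj ((k : ℂ) + 1) (by exact_mod_cast Nat.succ_ne_zero k) y
        push_cast
        rw [hE, ih w (hw hy), mul_zero]
    have hK : K P = 0 := by
      apply E_zero
      intro k y
      rw [E_K]
      exact key k _ (by simp)
    obtain ⟨Q, hQ⟩ := K_dvd P
    rw [hK, sub_zero] at hQ
    have hQ0 : Q ≠ 0 := by rintro rfl; exact hne (by simpa using hQ)
    have hlt : mo.toSyn (mo.degree Q) < mo.toSyn a := by
      rw [ha, hQ, mo.degree_mul (by simp) hQ0, mo.degree_X, map_add]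
      apply lt_add_of_pos_left
      rw [← mo.bot_eq_zero, bot_lt_iff_ne_bot, mo.bot_eq_zero]
      simp
    apply hQ0
    apply low
    · filter_upwards [hP, eventually_gt_atTop 0] with k hk hk0
      rw [hQ, map_mul, E_X] at hk
      refine (mul_eq_zero.1 hk).resolve_left ?_
      simp only [g, z0, dn, OrderDual.ofDual_toDual, iteratedDeriv_zero]
      exact Complex.Gamma_ne_zero_of_re_pos (by simpa using hk0)
    · exact hlt.le
    · rw [mo.coeff_eq_zero_of_lt hlt, Polynomial.degree_zero]
      exact bot_lt_iff_ne_bot.2 (by simpa using hp0)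
  · obtain ⟨Q, hQ⟩ := E_dvd P (γ + 1) (by
      intro y
      obtain ⟨w, rfl, -⟩ := T_surj γ h0 y
      rw [hE, hγ', zero_mul])
    have hQ0 : Q ≠ 0 := by rintro rfl; exact hne (by simpa using hQ)
    have hX : (Polynomial.X - Polynomial.C (γ+1)) ≠ 0 := Polynomial.X_sub_C_ne_zero _
    apply hQ0
    apply low
    · have : ∀ᶠ k : ℕ in atTop, (k : ℂ) ≠ γ + 1 := by
        by_cases h : ∃ m : ℕ, (m : ℂ) = γ + 1
        · obtain ⟨m, hm⟩ := h
          filter_upwards [eventually_gt_atTop m] with k hk hk'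
          rw [← hm] at hk'
          have : k = m := by exact_mod_cast hk'
          omega
        · push Not at h
          exact Eventually.of_forall h
      filter_upwards [hP, this] with k hk hk0
      rw [hQ, map_mul, E_C] at hk
      refine (mul_eq_zero.1 hk).resolve_left ?_
      simpa [sub_eq_zero] using hk0
    · rw [ha, hQ, mo.degree_mul (fun h => hX (MvPolynomial.C_injective _ _ (h.trans MvPolynomial.C_0.symm))) hQ0, mo.degree_C, zero_add]
    · have h1 : p = (Polynomial.X - Polynomial.C (γ+1)) * MvPolynomial.coeff a Q := by
        rw [← hpc]; conv_lhs => rw [hQ]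
        rw [MvPolynomial.coeff_C_mul]
      have h2 : MvPolynomial.coeff a Q ≠ 0 := by
        intro h; rw [h, mul_zero] at h1; exact hp0 h1
      rw [h1]
      apply Polynomial.degree_lt_degree
      rw [Polynomial.natDegree_mul hX h2, Polynomial.natDegree_X_sub_C]
      omega

end Holder

/-- Hölder's theorem: the Euler Gamma function is differentially transcendental over `ℂ(x)`:
any polynomial relation `P(x, Γ(x), Γ'(x), …, Γ⁽ⁿ⁾(x)) = 0` valid on the right half-plane
forces `P = 0`. -/
theorem gamma_differentially_transcendental
    (n : ℕ) (P : MvPolynomial (Fin (n + 2)) ℂ)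
    (hP : ∀ x : ℂ, 0 < x.re →
      MvPolynomial.eval
        (Fin.cases x (fun i : Fin (n + 1) => iteratedDeriv (i : ℕ) Complex.Gamma x)) P = 0) :
    P = 0 := by
  let v : Fin (n + 2) → Holder.A :=
    Fin.cases (MvPolynomial.C Polynomial.X) (fun i : Fin (n + 1) => MvPolynomial.X (OrderDual.toDual (i : ℕ)))
  obtain ⟨F, hFd⟩ : ∃ F : MvPolynomial (Fin (n + 2)) ℂ →+* Holder.A, F =
    MvPolynomial.eval₂Hom (MvPolynomial.C.comp Polynomial.C) v := ⟨_, rfl⟩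
  have hF : ∀ (x : ℂ) (y : ℕᵒᵈ → ℂ) (Q : MvPolynomial (Fin (n + 2)) ℂ), Holder.E x y (F Q) =
      MvPolynomial.eval (Fin.cases x (fun i : Fin (n + 1) => y (OrderDual.toDual (i : ℕ)))) Q := by
    intro x y Q
    induction Q using MvPolynomial.induction_on with
    | C p => simp [hFd]
    | add p q hp hq => simp [hp, hq]
    | mul_X p i hp =>
      rw [map_mul, map_mul, map_mul, hp]
      refine congrArg _ ?_
      simp only [hFd, MvPolynomial.coe_eval₂Hom, MvPolynomial.eval₂_X, MvPolynomial.eval_X]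
      refine Fin.cases ?_ (fun i => ?_) i <;> simp [v]
  have h0 : F P = 0 := by
    apply Holder.mainThm
    filter_upwards [Filter.eventually_gt_atTop 0] with k hk
    rw [hF]
    exact hP k (by simpa using hk)
  apply MvPolynomial.funext
  intro w
  have := hF (w 0) (fun i => if h : OrderDual.ofDual i < n + 1 then w (Fin.succ ⟨_, h⟩) else 0) P
  rw [h0, map_zero] at this
  rw [map_zero, this]
  congr 2
  funext i
  refine Fin.cases ?_ (fun i => ?_) i
  · simp
  · change w i.succ = dite ((i : ℕ) < n + 1) (fun h => w (Fin.succ ⟨i, h⟩)) (fun _ => 0)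
    rw [dif_pos i.isLt]
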